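/- Existence of a short vertex-restricted simplification: let P̃ be a polygonal curve in ℝ^d with vertices p̃_1,…,p̃_j, let ℓ ≥ 2, and suppose there exists a polygonal curve Q with at most ℓ vertices such that d_F(Q, P̃) ≤ Δ. Then there exists a subsequence of the vertices of P̃, starting with p̃_1 and ending with p̃_j and of length at most 2(ℓ−1), such that the polygonal curve P' through this subsequence satisfies d_F(P', P̃) ≤ 2Δ. -/

import Mathlib

/-! The proof fixes a slack `ε > 0` and a reparametrization `γ` matching `Q` to the polygonal curve
`P` within `D = Δ + ε`.  Each edge `k` of `Q` is matched to a parameter interval of `P`; let `a k`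
and `b k` be the first and the last vertex of `P` in that interval.  The selected vertices are all
the `a k` and `b k`, at most two per edge of `Q`.  Two consecutive selected vertices are either
adjacent on `P`, so that the edge between them lies on `P`, or they lie in the interval of one edge
of `Q` (`exists_subsequence`).  In the latter case the shortcut between them is within `D` of the
matched part of that edge of `Q`, which is within `D` of `P`, so the shortcut is within `2D` of the
corresponding piece of `P` (`exists_local_reparam`).  The piecewise matchings glue to a
reparametrization of `[0,1]` (`exists_glued_reparam`), giving distance at most `2(Δ + ε)`.

The infimum in the Fréchet distance need not be attained, so the subsequence depends on `ε`.  There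
are only finitely many candidate subsequences, so one of minimal distance works for
every `ε` at once. -/

open Set

noncomputable section

/-- Points in `ℝ^d`. -/
abbrev Pt (d : ℕ) : Type := EuclideanSpace ℝ (Fin d)

/-- A reparametrization: a continuous strictly increasing bijection of `[0,1]` onto itself. -/
def IsReparam (γ : ℝ → ℝ) : Prop :=
  ContinuousOn γ (Icc 0 1) ∧ StrictMonoOn γ (Icc 0 1) ∧ γ '' Icc 0 1 = Icc 0 1

/-- The Fréchet distance `d_F(P,Q) = inf_γ sup_{t ∈ [0,1]} ‖P(γ(t)) - Q(t)‖`
(only the values of the curves on `[0,1]` are relevant). -/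
def frechetDist {d : ℕ} (P Q : ℝ → Pt d) : ℝ :=
  ⨅ γ : {γ : ℝ → ℝ // IsReparam γ}, ⨆ s : Icc (0:ℝ) 1, ‖P (γ.1 s.1) - Q s.1‖

/-- The linearly parametrized line segment from `a` to `b`. -/
def seg {d : ℕ} (a b : Pt d) : ℝ → Pt d := fun s => (1 - s) • a + s • b

/-- The subcurve `P[a,b]` of `P`, linearly reparametrized over `[0,1]`. -/
def subcurve {d : ℕ} (P : ℝ → Pt d) (a b : ℝ) : ℝ → Pt d := fun s => P (a + s * (b - a))

/-- The polygonal curve with vertex sequence `pts 0, …, pts n`, uniformly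
parametrized over `[0,1]`. -/
def polyline {d n : ℕ} (pts : Fin (n + 1) → Pt d) : ℝ → Pt d := fun s =>
  if h : n = 0 then pts 0
  else
    let i : ℕ := min ⌊s * n⌋₊ (n - 1)
    have hi : i < n := lt_of_le_of_lt (min_le_right _ _) (by omega)
    (1 - (s * n - i)) • pts ⟨i, hi.trans n.lt_succ_self⟩ +
      (s * n - i) • pts ⟨i + 1, Nat.succ_lt_succ hi⟩

/-- `f ∈ 𝕏^d_ℓ`: `f` is a polygonal curve with at most `ℓ` vertices. -/
def IsPolygonal {d : ℕ} (f : ℝ → Pt d) (ℓ : ℕ) : Prop :=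
  ∃ n : ℕ, n + 1 ≤ ℓ ∧ ∃ pts : Fin (n + 1) → Pt d, f = polyline pts

/-- Concatenation of two curves (each parametrized over `[0,1]`). -/
def concat {d : ℕ} (f g : ℝ → Pt d) : ℝ → Pt d := fun s =>
  if s ≤ 1 / 2 then f (2 * s) else g (2 * s - 1)

/-- `CostLE P m t C Δ` states that the clustering cost satisfies `φ(P,C) ≤ Δ`:
there is a family `I` of index pairs `(i,j)`, `1 ≤ i < j ≤ m`, with
`⋃_{(i,j) ∈ I} [t i, t j] = [0,1]`, such that every corresponding subcurve is
within Fréchet distance `Δ` of some center in `C`. -/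
def CostLE {d : ℕ} (P : ℝ → Pt d) (m : ℕ) (t : ℕ → ℝ) (C : Set (ℝ → Pt d)) (Δ : ℝ) : Prop :=
  ∃ I : Set (ℕ × ℕ),
    (∀ q ∈ I, 1 ≤ q.1 ∧ q.1 < q.2 ∧ q.2 ≤ m) ∧
    (⋃ q ∈ I, Icc (t q.1) (t q.2)) = Icc (0:ℝ) 1 ∧
    ∀ q ∈ I, ∃ c ∈ C, frechetDist (subcurve P (t q.1) (t q.2)) c ≤ Δ

/-- The set `r_Q` of the set system `R` (ground set `{1,…,m−1}`):
`r_Q = {z : ∃ i ≤ z < j, d_F(Q, P[t_i,t_j]) ≤ Δ}`. -/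
def rSet {d : ℕ} (P : ℝ → Pt d) (m : ℕ) (t : ℕ → ℝ) (Δ : ℝ) (Q : ℝ → Pt d) : Set ℕ :=
  {z | 1 ≤ z ∧ z < m ∧ ∃ i j, 1 ≤ i ∧ i ≤ z ∧ z < j ∧ j ≤ m ∧
    frechetDist Q (subcurve P (t i) (t j)) ≤ Δ}

/-! ### Polygonal curves -/

lemma polyline_eq {d n : ℕ} (pts : Fin (n + 1) → Pt d) (i : ℕ) (hi : i < n) (s : ℝ)
    (h1 : (i : ℝ) ≤ s * n) (h2 : s * n ≤ i + 1) :
    polyline pts s = (1 - (s * n - i)) • pts ⟨i, by omega⟩ +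
      (s * n - i) • pts ⟨i + 1, by omega⟩ := by
  have hn : n ≠ 0 := by omega
  have key : ∀ m : ℕ, ∀ hm : m < n, min ⌊s * n⌋₊ (n - 1) = m →
      polyline pts s = (1 - (s * n - m)) • pts ⟨m, by omega⟩ +
      (s * n - m) • pts ⟨m + 1, by omega⟩ := by
    intro m hm h
    subst h
    simp only [polyline, dif_neg hn]
  rcases h2.lt_or_eq with h2 | h2
  · refine key i hi ?_
    have : ⌊s * n⌋₊ = i := (Nat.floor_eq_iff ((Nat.cast_nonneg i).trans h1)).2 ⟨h1, h2⟩
    omega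
  · have hf : ⌊s * n⌋₊ = i + 1 := by
      rw [h2]; exact_mod_cast Nat.floor_natCast (R := ℝ) (i + 1)
    by_cases hin : i = n - 1
    · exact key i hi (by omega)
    · rw [key (i + 1) (by omega) (by omega), h2]
      simp

lemma exists_edge {n : ℕ} (hn : 0 < n) (s : ℝ) (hs : s ∈ Icc (0 : ℝ) 1) :
    ∃ i < n, (i : ℝ) ≤ s * n ∧ s * n ≤ i + 1 := by
  have h0 : 0 ≤ s * n := mul_nonneg hs.1 (by positivity)
  rcases hs.2.lt_or_eq with h | h
  · refine ⟨⌊s * n⌋₊, ?_, Nat.floor_le h0, (Nat.lt_floor_add_one _).le⟩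
    rw [Nat.floor_lt h0]
    have : (0 : ℝ) < n := by exact_mod_cast hn
    nlinarith
  · refine ⟨n - 1, by omega, ?_, ?_⟩ <;> rw [h, Nat.cast_sub (by omega)] <;> simp

lemma polyline_zero {d : ℕ} (pts : Fin (0 + 1) → Pt d) (s : ℝ) : polyline pts s = pts 0 := by
  simp [polyline]

lemma polyline_bounded {d n : ℕ} (pts : Fin (n + 1) → Pt d) :
    ∃ M, ∀ s ∈ Icc (0 : ℝ) 1, ‖polyline pts s‖ ≤ M := by
  refine ⟨∑ k, ‖pts k‖, fun s hs => ?_⟩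
  have hk : ∀ k, ‖pts k‖ ≤ ∑ k, ‖pts k‖ := fun k =>
    Finset.single_le_sum (f := fun k => ‖pts k‖) (fun _ _ => norm_nonneg _) (Finset.mem_univ k)
  rcases Nat.eq_zero_or_pos n with rfl | hn
  · rw [polyline_zero]; exact hk 0
  obtain ⟨i, hi, h1, h2⟩ := exists_edge hn s hs
  rw [polyline_eq pts i hi s h1 h2]
  have := (convex_closedBall (0 : Pt d) (∑ k, ‖pts k‖))
    (mem_closedBall_zero_iff.2 (hk ⟨i, by omega⟩))
    (mem_closedBall_zero_iff.2 (hk ⟨i + 1, by omega⟩))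
    (a := 1 - (s * n - i)) (b := s * n - i) (by linarith) (by linarith) (by ring)
  exact mem_closedBall_zero_iff.1 this

/-! ### Fréchet distance -/

lemma IsReparam.mapsTo {γ : ℝ → ℝ} (h : IsReparam γ) {s : ℝ} (hs : s ∈ Icc (0 : ℝ) 1) :
    γ s ∈ Icc (0 : ℝ) 1 := h.2.2 ▸ mem_image_of_mem γ hs

lemma frechetDist_le {d : ℕ} {P Q : ℝ → Pt d} {γ : ℝ → ℝ} (hγ : IsReparam γ) {D : ℝ}
    (h : ∀ s ∈ Icc (0 : ℝ) 1, ‖P (γ s) - Q s‖ ≤ D) : frechetDist P Q ≤ D := by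
  have : Nonempty (Icc (0 : ℝ) 1) := ⟨⟨0, by simp⟩⟩
  refine (ciInf_le ⟨0, ?_⟩ (⟨γ, hγ⟩ : {γ : ℝ → ℝ // IsReparam γ})).trans
    (ciSup_le fun s => h s.1 s.2)
  rintro _ ⟨g, rfl⟩
  exact Real.iSup_nonneg fun _ => norm_nonneg _

lemma isReparam_id : IsReparam (fun s => s) :=
  ⟨continuousOn_id, fun _ _ _ _ h => h, by simp⟩

/-- For polygonal curves the suprema in the Fréchet distance are taken over bounded sets, so an
upper bound on the distance yields a genuine pointwise matching, up to arbitrarily small slack. -/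
lemma exists_reparam_of_frechetDist_lt {d n j : ℕ} (qs : Fin (n + 1) → Pt d)
    (pt : Fin (j + 1) → Pt d) {D : ℝ} (h : frechetDist (polyline qs) (polyline pt) < D) :
    ∃ γ, IsReparam γ ∧ ∀ s ∈ Icc (0 : ℝ) 1, ‖polyline qs (γ s) - polyline pt s‖ ≤ D := by
  have : Nonempty {γ : ℝ → ℝ // IsReparam γ} := ⟨⟨_, isReparam_id⟩⟩
  obtain ⟨⟨γ, hγ⟩, hlt⟩ := exists_lt_of_ciInf_lt h
  refine ⟨γ, hγ, fun s hs => ?_⟩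
  obtain ⟨M, hM⟩ := polyline_bounded qs
  obtain ⟨N, hN⟩ := polyline_bounded pt
  refine le_trans (le_ciSup (f := fun s : Icc (0 : ℝ) 1 => ‖polyline qs (γ s.1) - polyline pt s.1‖)
    ⟨M + N, ?_⟩ ⟨s, hs⟩) hlt.le
  rintro _ ⟨x, rfl⟩
  exact (norm_sub_le _ _).trans (add_le_add (hM _ (hγ.mapsTo x.2)) (hN _ x.2))

/-! ### Gluing reparametrizations -/

lemma exists_piece (u : ℕ → ℝ) (r : ℕ) (s : ℝ) (h0 : u 0 ≤ s) (h1 : s < u r) :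
    ∃ i < r, u i ≤ s ∧ s < u (i + 1) := by
  by_contra! hcon
  have : ∀ i ≤ r, u i ≤ s := by
    intro i
    induction i with
    | zero => exact fun _ => h0
    | succ k ih => exact fun hk => hcon k (by omega) (ih (by omega))
  exact absurd (this r le_rfl) (not_le.2 h1)

/-- Increasing homeomorphisms `φ i : [u i, u (i+1)] → [0,1]` glue to a reparametrization of `[0,1]`
sending the `i`-th piece to `[i/r, (i+1)/r]`.  Extending each `φ i` by `0` to the left and by `1`
to the right of its interval, the glued map is the average of the extensions. -/
lemma exists_glued_reparam (r : ℕ) (u : ℕ → ℝ) (hu : ∀ i < r, u i < u (i + 1))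
    (hu0 : u 0 = 0) (hur : u r = 1) (φ : ℕ → ℝ → ℝ)
    (hc : ∀ i < r, ContinuousOn (φ i) (Icc (u i) (u (i + 1))))
    (hm : ∀ i < r, StrictMonoOn (φ i) (Icc (u i) (u (i + 1))))
    (hφ0 : ∀ i < r, φ i (u i) = 0) (hφ1 : ∀ i < r, φ i (u (i + 1)) = 1) :
    ∃ γ, IsReparam γ ∧ ∀ i < r, ∀ s ∈ Icc (u i) (u (i + 1)), γ s * r = i + φ i s := by
  have hr : 0 < r := by
    rcases Nat.eq_zero_or_pos r with rfl | h
    · linarith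
    · exact h
  have hr' : (0 : ℝ) < r := by exact_mod_cast hr
  have humono : ∀ k, ∀ i ≤ k, k ≤ r → u i ≤ u k := by
    intro k
    induction k with
    | zero => intro i hi _; rw [Nat.le_zero.1 hi]
    | succ k ih =>
      intro i hi hk
      rcases Nat.lt_or_ge i (k + 1) with h | h
      · exact (ih i (by omega) (by omega)).trans (hu k (by omega)).le
      · rw [show i = k + 1 by omega]
  set c : ℕ → ℝ → ℝ := fun i s => max (u i) (min (u (i + 1)) s) with hcdef
  have hcmem : ∀ i < r, ∀ s, c i s ∈ Icc (u i) (u (i + 1)) := fun i hi s =>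
    ⟨le_max_left _ _, max_le (hu i hi).le (min_le_left _ _)⟩
  have hcmono : ∀ i, Monotone (c i) := fun i s t hst => by
    simp only [hcdef]; gcongr
  have hccont : ∀ i, Continuous (c i) := fun i => by simp only [hcdef]; fun_prop
  have hcid : ∀ i, ∀ s ∈ Icc (u i) (u (i + 1)), c i s = s := fun i s hs => by
    simp only [hcdef]; rw [min_eq_right hs.2, max_eq_right hs.1]
  have hval : ∀ i < r, ∀ s ∈ Icc (u i) (u (i + 1)),
      ∑ l ∈ Finset.range r, φ l (c l s) = i + φ i s := by
    intro i hi s hs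
    obtain ⟨m, rfl⟩ : ∃ m, r = i + (1 + m) := ⟨r - i - 1, by omega⟩
    rw [Finset.sum_range_add, Finset.sum_range_add]
    have e1 : ∑ l ∈ Finset.range i, φ l (c l s) = i := by
      rw [Finset.sum_congr rfl (g := fun _ => (1 : ℝ))]
      · simp
      · intro l hl
        have hl := Finset.mem_range.1 hl
        have : u (l + 1) ≤ s := (humono i (l + 1) (by omega) hi.le).trans hs.1
        rw [show c l s = u (l + 1) by
          simp only [hcdef]; rw [min_eq_left this, max_eq_right (hu l (by omega)).le]]
        exact hφ1 l (by omega)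
    have e2 : ∑ x ∈ Finset.range m, φ (i + (1 + x)) (c (i + (1 + x)) s) = 0 := by
      refine Finset.sum_eq_zero fun x hx => ?_
      have hx := Finset.mem_range.1 hx
      have : s ≤ u (i + (1 + x)) := hs.2.trans (humono _ (i + 1) (by omega) (by omega))
      rw [show c (i + (1 + x)) s = u (i + (1 + x)) by
        simp only [hcdef]; exact max_eq_left ((min_le_right _ _).trans this)]
      exact hφ0 _ (by omega)
    rw [e1, e2]
    simp [hcid i s hs]
  have hcontγ : Continuous fun s => (∑ l ∈ Finset.range r, φ l (c l s)) / r := by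
    refine Continuous.div_const (continuous_finsetSum _ fun l hl => ?_) _
    have hl := Finset.mem_range.1 hl
    exact (hc l hl).comp_continuous (hccont l) (hcmem l hl)
  have hmonoγ : StrictMonoOn (fun s => (∑ l ∈ Finset.range r, φ l (c l s)) / r) (Icc 0 1) := by
    intro s hs t ht hst
    refine div_lt_div_of_pos_right ?_ hr'
    obtain ⟨i, hi, h1, h2⟩ := exists_piece u r s (hu0 ▸ hs.1) (hur ▸ hst.trans_le ht.2)
    refine Finset.sum_lt_sum (fun l hl => ?_) ⟨i, Finset.mem_range.2 hi, ?_⟩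
    · have hl := Finset.mem_range.1 hl
      exact (hm l hl).monotoneOn (hcmem l hl s) (hcmem l hl t) (hcmono l hst.le)
    · refine hm i hi (hcmem i hi s) (hcmem i hi t) ?_
      rw [hcid i s ⟨h1, h2.le⟩]
      exact lt_max_of_lt_right (lt_min h2 hst)
  have hγ0 : (∑ l ∈ Finset.range r, φ l (c l 0)) / r = 0 := by
    have h := hφ0 0 hr
    rw [hu0] at h
    rw [hval 0 hr 0 ⟨hu0.le, hu0 ▸ (hu 0 hr).le⟩, h]; simp
  have hγ1 : (∑ l ∈ Finset.range r, φ l (c l 1)) / r = 1 := by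
    obtain ⟨m, rfl⟩ : ∃ m, r = m + 1 := ⟨r - 1, by omega⟩
    rw [hval m (by omega) 1 ⟨hur ▸ (hu m (by omega)).le, hur.ge⟩, ← hur, hφ1 m (by omega), hur]
    push_cast at hr' ⊢
    field_simp
  refine ⟨fun s => (∑ l ∈ Finset.range r, φ l (c l s)) / r,
    ⟨hcontγ.continuousOn, hmonoγ, ?_⟩, fun i hi s hs => ?_⟩
  · have h := hcontγ.continuousOn.image_Icc_of_monotoneOn zero_le_one hmonoγ.monotoneOn
    simp only [hγ0, hγ1] at h
    exact h
  · simp only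
    rw [div_mul_cancel₀ _ hr'.ne', hval i hi s hs]

/-! ### Choosing the vertices -/

/-- If the intervals `[a k, b k]`, `k < n`, cover all vertices, then the set of all `a k` and `b k`
is a subsequence from first to last vertex in which neighbours are adjacent vertices or lie in a
common interval.  Empty intervals, with `b k < a k`, are allowed. -/
lemma exists_subsequence {n j : ℕ} (a b : Fin n → Fin (j + 1))
    (hcov : ∀ v, ∃ k, a k ≤ v ∧ v ≤ b k) :
    ∃ (r : ℕ) (e : Fin (r + 1) → Fin (j + 1)),
      StrictMono e ∧ e 0 = 0 ∧ e (Fin.last r) = Fin.last j ∧ r + 1 ≤ 2 * n ∧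
      ∀ i : Fin r, (e i.castSucc : ℕ) + 1 = e i.succ ∨
        ∃ k, a k ≤ e i.castSucc ∧ e i.succ ≤ b k := by
  classical
  set S : Finset (Fin (j + 1)) := Finset.univ.image a ∪ Finset.univ.image b with hS
  have haS : ∀ k, a k ∈ S := fun k => by simp [hS]
  have hbS : ∀ k, b k ∈ S := fun k => by simp [hS]
  have hcard : S.card ≤ 2 * n := by
    have h1 := Finset.card_union_le (Finset.univ.image a) (Finset.univ.image b)
    have h2 := Finset.card_image_le (s := Finset.univ) (f := a)
    have h3 := Finset.card_image_le (s := Finset.univ) (f := b)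
    simp only [Finset.card_univ, Fintype.card_fin] at h2 h3
    rw [hS]; omega
  have h0S : (0 : Fin (j + 1)) ∈ S := by
    obtain ⟨k, hk, _⟩ := hcov 0
    have : a k = 0 := le_antisymm hk (Fin.zero_le _)
    exact this ▸ haS k
  have hlS : Fin.last j ∈ S := by
    obtain ⟨k, _, hk⟩ := hcov (Fin.last j)
    have : b k = Fin.last j := le_antisymm (Fin.le_last _) hk
    exact this ▸ hbS k
  have hpos : 0 < S.card := Finset.card_pos.2 ⟨_, h0S⟩
  obtain ⟨r, hr⟩ : ∃ r, S.card = r + 1 := ⟨S.card - 1, by omega⟩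
  set e := S.orderEmbOfFin hr with he
  have hsurj : ∀ v ∈ S, ∃ i, e i = v := fun v hv => by
    have : v ∈ Set.range e := by rw [he, Finset.range_orderEmbOfFin]; exact hv
    exact this
  refine ⟨r, e, e.strictMono, ?_, ?_, by omega, fun i => ?_⟩
  · obtain ⟨i, hi⟩ := hsurj _ h0S
    exact le_antisymm (hi ▸ e.monotone (Fin.zero_le i)) (Fin.zero_le _)
  · obtain ⟨i, hi⟩ := hsurj _ hlS
    exact le_antisymm (Fin.le_last _) (hi ▸ e.monotone (Fin.le_last i))
  · by_contra! hcon
    obtain ⟨hne, hk⟩ := hcon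
    have hlt : e i.castSucc < e i.succ := e.strictMono i.castSucc_lt_succ
    -- no selected vertex lies strictly between two consecutive ones
    have hgap : ∀ v ∈ S, v ≤ e i.castSucc ∨ e i.succ ≤ v := by
      intro v hv
      obtain ⟨l, rfl⟩ := hsurj v hv
      rcases Nat.lt_or_ge i.val l.val with h | h
      · exact Or.inr (e.monotone (Fin.le_def.2 (by simp; omega)))
      · exact Or.inl (e.monotone (Fin.le_def.2 (by simpa using h)))
    -- the interval covering the vertex after `e i` must then contain both neighbours
    have hlt' : (e i.castSucc : ℕ) < e i.succ := hlt
    have hb := (e i.succ).isLt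
    obtain ⟨k, h1, h2⟩ := hcov ⟨e i.castSucc + 1, by omega⟩
    have h1' : (a k : ℕ) ≤ e i.castSucc + 1 := h1
    have h2' : (e i.castSucc : ℕ) + 1 ≤ b k := h2
    have ha : a k ≤ e i.castSucc := (hgap _ (haS k)).resolve_right fun h => by
      have h : (e i.succ : ℕ) ≤ a k := h
      omega
    have hb : e i.succ ≤ b k := (hgap _ (hbS k)).resolve_left fun h => by
      have h : (b k : ℕ) ≤ e i.castSucc := h
      omega
    exact absurd hb (not_le.2 (hk k ha))

/-! ### The simplification for a fixed matching -/

/-- If the part of `P` between vertices `v < w` is a single edge or is matched to one edge `k` of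
`Q` within `D`, then it is matched to the shortcut from `v` to `w` within `2D`. -/
lemma exists_local_reparam {d n j : ℕ} (qs : Fin (n + 1) → Pt d) (pt : Fin (j + 1) → Pt d)
    (hj : 0 < j) {D : ℝ} (hD : 0 ≤ D) {γ : ℝ → ℝ} (hγ : IsReparam γ)
    (hdist : ∀ s ∈ Icc (0 : ℝ) 1, ‖polyline qs (γ s) - polyline pt s‖ ≤ D)
    (v w : Fin (j + 1)) (hvw : v < w)
    (hcase : (v : ℕ) + 1 = w ∨ ∃ k < n, (k : ℝ) ≤ γ (v / j) * n ∧ γ (w / j) * n ≤ k + 1) :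
    ∃ φ : ℝ → ℝ, ContinuousOn φ (Icc ((v : ℝ) / j) ((w : ℝ) / j)) ∧
      StrictMonoOn φ (Icc ((v : ℝ) / j) ((w : ℝ) / j)) ∧
      φ ((v : ℝ) / j) = 0 ∧ φ ((w : ℝ) / j) = 1 ∧
      ∀ s ∈ Icc ((v : ℝ) / j) ((w : ℝ) / j),
        ‖((1 - φ s) • pt v + φ s • pt w) - polyline pt s‖ ≤ 2 * D := by
  have hj' : (0 : ℝ) < j := by exact_mod_cast hj
  have hvert : ∀ x : Fin (j + 1), polyline pt ((x : ℝ) / j) = pt x := by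
    intro x
    have hx : (x : ℝ) / j * j = x := div_mul_cancel₀ _ hj'.ne'
    rcases Nat.lt_or_ge x j with h | h
    · rw [polyline_eq pt x h _ hx.ge (by rw [hx]; linarith), hx]; simp
    · have hxj : (x : ℕ) = j - 1 + 1 := by omega
      have hxj' : (x : ℝ) = ((j - 1 : ℕ) : ℝ) + 1 := by exact_mod_cast hxj
      rw [polyline_eq pt (j - 1) (by omega) _ (by rw [hx, hxj']; linarith) (by rw [hx, hxj']), hx,
        hxj']
      have : (⟨j - 1 + 1, by omega⟩ : Fin (j + 1)) = x := Fin.ext hxj.symm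
      simp [this]
  rcases hcase with h | ⟨k, hk, hk1, hk2⟩
  · have hw : (w : ℝ) = v + 1 := by exact_mod_cast h.symm
    have hwj := w.isLt
    refine ⟨fun s => s * j - v, by fun_prop, fun s _ t _ hst => ?_, ?_, ?_, fun s hs => ?_⟩
    · have := mul_lt_mul_of_pos_right hst hj'
      simp only; linarith
    · simp only; rw [div_mul_cancel₀ _ hj'.ne']; ring
    · simp only; rw [div_mul_cancel₀ _ hj'.ne', hw]; ring
    · have h1 := (div_le_iff₀ hj').1 hs.1
      have h2 := (le_div_iff₀ hj').1 hs.2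
      rw [polyline_eq pt v (by omega) s h1 (by linarith)]
      have : (⟨(v : ℕ) + 1, by omega⟩ : Fin (j + 1)) = w := Fin.ext h
      rw [this]
      simp only [Fin.eta, sub_self, norm_zero]
      linarith
  · have hmem : ∀ x : Fin (j + 1), (x : ℝ) / j ∈ Icc (0 : ℝ) 1 := fun x =>
      ⟨by positivity, (div_le_one hj').2 (by exact_mod_cast Nat.lt_succ_iff.1 x.isLt)⟩
    have hsub : Icc ((v : ℝ) / j) ((w : ℝ) / j) ⊆ Icc 0 1 :=
      Icc_subset_Icc (hmem v).1 (hmem w).2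
    have hvw' : (v : ℝ) / j < (w : ℝ) / j :=
      div_lt_div_of_pos_right (by exact_mod_cast hvw) hj'
    set g0 := γ ((v : ℝ) / j) with hg0
    set g1 := γ ((w : ℝ) / j) with hg1
    have hg : 0 < g1 - g0 := sub_pos.2 (hγ.2.1 (hmem v) (hmem w) hvw')
    have hn' : (0 : ℝ) < n := by exact_mod_cast (by omega : 0 < n)
    refine ⟨fun s => (γ s - g0) / (g1 - g0), ?_, fun s hs t ht hst => ?_, ?_, ?_, fun s hs => ?_⟩
    · exact ((hγ.1.mono hsub).sub continuousOn_const).div_const _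
    · have := hγ.2.1 (hsub hs) (hsub ht) hst
      exact div_lt_div_of_pos_right (by linarith) hg
    · simp [hg0]
    · exact div_self hg.ne'
    · have m0 : g0 ≤ γ s := hγ.2.1.monotoneOn (hmem v) (hsub hs) hs.1
      have m1 : γ s ≤ g1 := hγ.2.1.monotoneOn (hsub hs) (hmem w) hs.2
      have m0' := mul_le_mul_of_nonneg_right m0 hn'.le
      have m1' := mul_le_mul_of_nonneg_right m1 hn'.le
      set x := (γ s - g0) / (g1 - g0) with hx
      have hx0 : 0 ≤ x := div_nonneg (by linarith) hg.le
      have hx1 : x ≤ 1 := (div_le_one hg).2 (by linarith)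
      have hγx : γ s = g0 + x * (g1 - g0) := by rw [hx, div_mul_cancel₀ _ hg.ne']; ring
      -- `Q` is affine on its edge `k`
      have haff : polyline qs (γ s) = (1 - x) • polyline qs g0 + x • polyline qs g1 := by
        rw [polyline_eq qs k hk (γ s) (by linarith) (by linarith),
          polyline_eq qs k hk g0 (by linarith) (by linarith),
          polyline_eq qs k hk g1 (by linarith) (by linarith), hγx]
        module
      have dv : ‖pt v - polyline qs g0‖ ≤ D := by
        have := hdist _ (hmem v)
        rwa [hvert, norm_sub_rev] at this
      have dw : ‖pt w - polyline qs g1‖ ≤ D := by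
        have := hdist _ (hmem w)
        rwa [hvert, norm_sub_rev] at this
      have hconv := (convex_closedBall (0 : Pt d) D) (mem_closedBall_zero_iff.2 dv)
        (mem_closedBall_zero_iff.2 dw) (a := 1 - x) (b := x) (by linarith) hx0 (by ring)
      rw [mem_closedBall_zero_iff] at hconv
      have hs' := hdist s (hsub hs)
      calc ‖((1 - x) • pt v + x • pt w) - polyline pt s‖
          = ‖((1 - x) • (pt v - polyline qs g0) + x • (pt w - polyline qs g1)) +
              (polyline qs (γ s) - polyline pt s)‖ := by
            congr 1; rw [haff]; module
        _ ≤ D + D := (norm_add_le _ _).trans (add_le_add hconv hs')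
        _ = 2 * D := by ring

lemma exists_simplification {d n j : ℕ} (qs : Fin (n + 1) → Pt d) (pt : Fin (j + 1) → Pt d)
    (hn : 0 < n) (hj : 0 < j) {D : ℝ} {γ : ℝ → ℝ} (hγ : IsReparam γ)
    (hdist : ∀ s ∈ Icc (0 : ℝ) 1, ‖polyline qs (γ s) - polyline pt s‖ ≤ D) :
    ∃ (r : ℕ) (e : Fin (r + 1) → Fin (j + 1)),
      StrictMono e ∧ e 0 = 0 ∧ e (Fin.last r) = Fin.last j ∧ r + 1 ≤ 2 * n ∧
      frechetDist (polyline (pt ∘ e)) (polyline pt) ≤ 2 * D := by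
  have hD : 0 ≤ D := (norm_nonneg _).trans (hdist 0 (by simp))
  have hj' : (0 : ℝ) < j := by exact_mod_cast hj
  have hn' : (0 : ℝ) < n := by exact_mod_cast hn
  have hmem : ∀ x : Fin (j + 1), (x : ℝ) / j ∈ Icc (0 : ℝ) 1 := fun x =>
    ⟨by positivity, (div_le_one hj').2 (by exact_mod_cast Nat.lt_succ_iff.1 x.isLt)⟩
  -- `t k` is the parameter on `P` matched to vertex `k` of `Q`
  have ht : ∀ k : Fin (n + 1), ∃ t ∈ Icc (0 : ℝ) 1, γ t = (k : ℝ) / n := fun k => by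
    have : (k : ℝ) / n ∈ γ '' Icc 0 1 := by
      rw [hγ.2.2]
      exact ⟨by positivity, (div_le_one hn').2 (by exact_mod_cast Nat.lt_succ_iff.1 k.isLt)⟩
    exact this
  choose t htm htγ using ht
  have htj : ∀ k, t k * j ≤ j := fun k => by nlinarith [(htm k).2]
  have htj0 : ∀ k, 0 ≤ t k * j := fun k => mul_nonneg (htm k).1 hj'.le
  obtain ⟨r, e, hemono, he0, hel, hcard, hcons⟩ := exists_subsequence (n := n) (j := j)
    (fun k => ⟨⌈t k.castSucc * j⌉₊, Nat.lt_succ_iff.2 (Nat.ceil_le.2 (htj _))⟩)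
    (fun k => ⟨⌊t k.succ * j⌋₊, Nat.lt_succ_iff.2 (Nat.floor_le_of_le (htj _))⟩) (fun v => by
      obtain ⟨k, hk, h1, h2⟩ := exists_edge hn _ (hγ.mapsTo (hmem v))
      refine ⟨⟨k, hk⟩, ?_, ?_⟩
      · refine Fin.le_def.2 (Nat.ceil_le.2 ?_)
        rw [← le_div_iff₀ hj', ← hγ.2.1.le_iff_le (htm _) (hmem v), htγ, div_le_iff₀ hn']
        exact h1
      · refine Fin.le_def.2 (Nat.le_floor ?_)
        rw [← div_le_iff₀ hj', ← hγ.2.1.le_iff_le (hmem v) (htm _), htγ, le_div_iff₀ hn']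
        simpa using h2)
  refine ⟨r, e, hemono, he0, hel, hcard, ?_⟩
  have hr : 0 < r := by
    rcases Nat.eq_zero_or_pos r with rfl | h
    · exfalso
      have h := he0.symm.trans hel
      have := congrArg Fin.val h
      simp at this
      omega
    · exact h
  have hloc : ∀ i : Fin r, ∃ φ : ℝ → ℝ,
      ContinuousOn φ (Icc ((e i.castSucc : ℝ) / j) ((e i.succ : ℝ) / j)) ∧
      StrictMonoOn φ (Icc ((e i.castSucc : ℝ) / j) ((e i.succ : ℝ) / j)) ∧
      φ ((e i.castSucc : ℝ) / j) = 0 ∧ φ ((e i.succ : ℝ) / j) = 1 ∧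
      ∀ s ∈ Icc ((e i.castSucc : ℝ) / j) ((e i.succ : ℝ) / j),
        ‖((1 - φ s) • pt (e i.castSucc) + φ s • pt (e i.succ)) - polyline pt s‖ ≤ 2 * D := by
    intro i
    refine exists_local_reparam qs pt hj hD hγ hdist _ _ (hemono i.castSucc_lt_succ)
      ((hcons i).imp id ?_)
    rintro ⟨k, h1, h2⟩
    refine ⟨k, k.isLt, ?_, ?_⟩
    · have h1 := Nat.ceil_le.1 (Fin.le_def.1 h1)
      rw [← le_div_iff₀ hj', ← hγ.2.1.le_iff_le (htm _) (hmem _), htγ, div_le_iff₀ hn'] at h1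
      exact h1
    · have h2 := (Nat.le_floor_iff (htj0 _)).1 (Fin.le_def.1 h2)
      rw [← div_le_iff₀ hj', ← hγ.2.1.le_iff_le (hmem _) (htm _), htγ, le_div_iff₀ hn'] at h2
      simpa using h2
  choose φ hφc hφm hφ0 hφ1 hφd using hloc
  -- extension of the knots and local matchings to all natural indices
  set u : ℕ → ℝ := fun i => (e ⟨min i r, by omega⟩ : ℝ) / j with hu
  set ψ : ℕ → ℝ → ℝ := fun i => if h : i < r then φ ⟨i, h⟩ else id with hψ
  have hu1 : ∀ i (h : i < r), u i = (e (Fin.castSucc ⟨i, h⟩) : ℝ) / j := fun i h => by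
    simp only [hu]
    congr 4
    exact Fin.ext (min_eq_left h.le)
  have hu2 : ∀ i (h : i < r), u (i + 1) = (e (Fin.succ ⟨i, h⟩) : ℝ) / j := fun i h => by
    simp only [hu]
    congr 4
    exact Fin.ext (min_eq_left h)
  have hψ1 : ∀ i (h : i < r), ψ i = φ ⟨i, h⟩ := fun i h => by simp only [hψ, dif_pos h]
  have hu0 : u 0 = 0 := by rw [hu1 0 hr]; simp [he0]
  have hur : u r = 1 := by
    have : (⟨min r r, by omega⟩ : Fin (r + 1)) = Fin.last r := Fin.ext (by simp)
    simp only [hu, this, hel]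
    simp [hj'.ne']
  obtain ⟨Γ, hΓ, hΓv⟩ := exists_glued_reparam r u
    (fun i h => by
      rw [hu1 i h, hu2 i h]
      exact div_lt_div_of_pos_right (by exact_mod_cast hemono (Fin.castSucc_lt_succ)) hj')
    hu0 hur ψ
    (fun i h => by rw [hu1 i h, hu2 i h, hψ1 i h]; exact hφc _)
    (fun i h => by rw [hu1 i h, hu2 i h, hψ1 i h]; exact hφm _)
    (fun i h => by rw [hu1 i h, hψ1 i h]; exact hφ0 _)
    (fun i h => by rw [hu2 i h, hψ1 i h]; exact hφ1 _)
  refine frechetDist_le hΓ fun s hs => ?_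
  obtain ⟨i, hi, hsi⟩ : ∃ i < r, s ∈ Icc (u i) (u (i + 1)) := by
    rcases hs.2.lt_or_eq with h | h
    · obtain ⟨i, hi, h1, h2⟩ := exists_piece u r s (hu0 ▸ hs.1) (hur ▸ h)
      exact ⟨i, hi, h1, h2.le⟩
    · refine ⟨r - 1, by omega, ?_, ?_⟩
      · rw [h, hu1 (r - 1) (by omega)]; exact (hmem _).2
      · rw [show r - 1 + 1 = r by omega, hur]; exact h.le
  have hv := hΓv i hi s hsi
  rw [hu1 i hi, hu2 i hi] at hsi
  rw [hψ1 i hi] at hv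
  have hb0 : 0 ≤ φ ⟨i, hi⟩ s := by
    rw [← hφ0 ⟨i, hi⟩]
    exact (hφm _).monotoneOn ⟨le_rfl, hsi.1.trans hsi.2⟩ hsi hsi.1
  have hb1 : φ ⟨i, hi⟩ s ≤ 1 := by
    rw [← hφ1 ⟨i, hi⟩]
    exact (hφm _).monotoneOn hsi ⟨hsi.1.trans hsi.2, le_rfl⟩ hsi.2
  rw [polyline_eq (pt ∘ e) i hi (Γ s) (by linarith) (by linarith), hv, add_sub_cancel_left]
  exact hφd ⟨i, hi⟩ s hsi

/-- Existence of a short vertex-restricted simplification: if some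
curve with at most `ℓ` vertices is within Fréchet distance `Δ` of the polygonal curve
with vertices `pt 0, …, pt j`, then some subsequence of the vertices, starting at the
first and ending at the last vertex, of length at most `2(ℓ-1)`, spans a polygonal
curve within Fréchet distance `2Δ` of it. -/
theorem stmt11 {d : ℕ} (Δ : ℝ) (hΔ : 0 < Δ) (ℓ : ℕ) (hℓ : 2 ≤ ℓ)
    (j : ℕ) (pt : Fin (j + 1) → Pt d)
    (hQ : ∃ Q, IsPolygonal Q ℓ ∧ frechetDist Q (polyline pt) ≤ Δ) :
    ∃ (r : ℕ) (e : Fin (r + 1) → Fin (j + 1)),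
      StrictMono e ∧ e 0 = 0 ∧ e (Fin.last r) = Fin.last j ∧
      r + 1 ≤ 2 * (ℓ - 1) ∧
      frechetDist (polyline (pt ∘ e)) (polyline pt) ≤ 2 * Δ := by
  obtain ⟨Q, ⟨n, hnl, qs, rfl⟩, hF⟩ := hQ
  rcases Nat.eq_zero_or_pos j with rfl | hj
  · refine ⟨0, fun _ => 0, fun a b h => absurd (Fin.lt_def.1 h) (by omega), rfl, rfl,
      by omega, ?_⟩
    refine frechetDist_le isReparam_id fun s _ => ?_
    rw [polyline_zero, polyline_zero]
    simp [hΔ.le]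
  -- a one-vertex curve `Q` is a degenerate edge
  obtain ⟨m, hm, hml, qs', hF⟩ : ∃ m, 0 < m ∧ m + 1 ≤ ℓ ∧ ∃ qs' : Fin (m + 1) → Pt d,
      frechetDist (polyline qs') (polyline pt) ≤ Δ := by
    rcases Nat.eq_zero_or_pos n with rfl | hn
    · refine ⟨1, one_pos, hℓ, fun _ => qs 0, ?_⟩
      have : polyline (fun _ : Fin (1 + 1) => qs 0) = polyline qs := by
        funext s
        rw [polyline_zero]
        simp only [polyline, one_ne_zero, dif_neg, not_false_eq_true]
        module
      rwa [this]
    · exact ⟨n, hn, hnl, qs, hF⟩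
  have key : ∀ ε > 0, ∃ (r : ℕ) (e : Fin (r + 1) → Fin (j + 1)),
      StrictMono e ∧ e 0 = 0 ∧ e (Fin.last r) = Fin.last j ∧ r + 1 ≤ 2 * (ℓ - 1) ∧
      frechetDist (polyline (pt ∘ e)) (polyline pt) ≤ 2 * Δ + ε := by
    intro ε hε
    obtain ⟨γ, hγ, hdist⟩ := exists_reparam_of_frechetDist_lt qs' pt
      (D := Δ + ε / 2) (by linarith)
    obtain ⟨r, e, h1, h2, h3, h4, h5⟩ := exists_simplification qs' pt hm hj hγ hdist
    exact ⟨r, e, h1, h2, h3, by omega, by linarith⟩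
  -- minimize over the finitely many candidate subsequences
  let X := Σ r : Fin (2 * (ℓ - 1)), (Fin (r.val + 1) → Fin (j + 1))
  let good : Set X := {x | StrictMono x.2 ∧ x.2 0 = 0 ∧ x.2 (Fin.last _) = Fin.last j}
  let F : X → ℝ := fun x => frechetDist (polyline (pt ∘ x.2)) (polyline pt)
  have key' : ∀ ε > 0, ∃ x ∈ good, F x ≤ 2 * Δ + ε := by
    intro ε hε
    obtain ⟨r, e, h1, h2, h3, h4, h5⟩ := key ε hε
    exact ⟨⟨⟨r, by omega⟩, e⟩, ⟨h1, h2, h3⟩, h5⟩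
  obtain ⟨x1, hx1, _⟩ := key' 1 one_pos
  obtain ⟨x, hx, hmin⟩ := Set.exists_min_image good F (Set.toFinite _) ⟨x1, hx1⟩
  refine ⟨x.1, x.2, hx.1, hx.2.1, hx.2.2, x.1.isLt, le_of_forall_pos_le_add fun ε hε => ?_⟩
  obtain ⟨y, hy, hyF⟩ := key' ε hε
  exact (hmin y hy).trans hyF
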